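/- arXiv:2510.25400 — 3 statements merged into one kernel-verified Lean document; each statement's English description precedes it below -/
import Mathlib

section
/- Let n ≥ d ≥ 4000 be integers and κ ≥ 1. Let Φ : {1,…,d}^n → Δ_d be an estimator such that, writing P̂_n = Φ(X_1, …, X_n) for an i.i.d. sample X_1, …, X_n from P, for every P ∈ Δ_d the event {χ²(P, P̂_n) ≤ κd/n} has positive probability. Then for every δ ∈ (e^{-n}, e^{-6.32κ}) there exists a distribution P ∈ Δ_d such that the probability that χ²(P, P̂_n) ≥ C₂ · (d + log²(1/δ))/n is at least δ, where C₂ = 1/(10000κ). -/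
open Finset
open scoped ENNReal

/-- Probability of an event `E` under an i.i.d. sample of size `n` from the
distribution `p` on `{1, …, d}`. -/
noncomputable def sampleProb {n d : ℕ} (p : Fin d → ℝ) (E : Set (Fin n → Fin d)) : ℝ :=
  ∑ x : Fin n → Fin d, Set.indicator E (fun y => ∏ i, p (y i)) x

/-- χ²-divergence, valued in `ℝ≥0∞`: a term with `q j = 0` and `p j ≠ q j`
contributes `+∞` (and contributes `0` if `p j = q j`). -/
noncomputable def chiSqE {d : ℕ} (p q : Fin d → ℝ) : ℝ≥0∞ :=
  ∑ j, ENNReal.ofReal ((p j - q j) ^ 2) / ENNReal.ofReal (q j)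

/-!
Two different obstructions produce the two summands of `d + log² (1/δ)`.

*Confidence.* Let `L = log (1/δ)`. On the sample that only sees `a`, the estimate must be good for
the Dirac mass at `a`, so it gives total mass at most `κ d / n` to the other points and hence mass
at most `2κ / n` to one of them, `j`. The law with masses `exp (-L/n)` at `a` and `1 - exp (-L/n)`
at `j` produces the same sample with probability `exp (-L) = δ`, and there the point `j` alone
costs order `(L/n)² / (κ/n) = L² / (κ n)`.

*Dimension.* About `d/2` disjoint pairs of points are considered, and exactly one point of each
pair receives mass `1/(2n)`. A given pair is unseen with probability at least `1/2`, and then the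
estimator loses order `1/n` on that pair for one of the two choices (Le Cam). Averaging over all
choices (Assouad) gives a law losing in expectation on a quarter of the pairs, hence on a tenth of
them with probability at least `0.15`, which exceeds `δ`.
-/

section SampleProb

variable {n d : ℕ} {p p' : Fin d → ℝ} {E F : Set (Fin n → Fin d)}

lemma sampleProb_mono (hp : ∀ j, 0 ≤ p j) (h : E ⊆ F) : sampleProb p E ≤ sampleProb p F :=
  sum_le_sum fun x _ ↦
    Set.indicator_le_indicator_of_subset h (fun _ ↦ prod_nonneg fun _ _ ↦ hp _) x

lemma sampleProb_union_le (hp : ∀ j, 0 ≤ p j) :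
    sampleProb p (E ∪ F) ≤ sampleProb p E + sampleProb p F := by
  rw [sampleProb, sampleProb, sampleProb, ← sum_add_distrib]
  refine sum_le_sum fun x _ ↦ ?_
  have hx : 0 ≤ ∏ i, p (x i) := prod_nonneg fun _ _ ↦ hp _
  by_cases hE : x ∈ E <;> by_cases hF : x ∈ F <;> simp [hE, hF, hx]

lemma sampleProb_congr (h : ∀ x ∈ E, ∀ i, p (x i) = p' (x i)) :
    sampleProb p E = sampleProb p' E := by
  refine sum_congr rfl fun x _ ↦ ?_
  by_cases hx : x ∈ E
  · simp only [Set.indicator_of_mem hx, h x hx]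
  · simp only [Set.indicator_of_notMem hx]

lemma sampleProb_forall_mem (p : Fin d → ℝ) (S : Finset (Fin d)) :
    sampleProb (n := n) p {x | ∀ i, x i ∈ S} = (∑ j ∈ S, p j) ^ n := by
  have hS : {x : Fin n → Fin d | ∀ i, x i ∈ S} = ↑(Fintype.piFinset fun _ : Fin n ↦ S) := by
    ext x
    simp
  rw [sampleProb, hS, sum_indicator_subset _ (subset_univ _), sum_pow']

lemma pow_le_sampleProb_of_const_mem (hp : ∀ j, 0 ≤ p j) {a : Fin d} (h : (fun _ ↦ a) ∈ E) :
    p a ^ n ≤ sampleProb p E := by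
  have hle := single_le_sum (f := E.indicator fun y ↦ ∏ i, p (y i))
    (fun x _ ↦ Set.indicator_nonneg (fun _ _ ↦ prod_nonneg fun _ _ ↦ hp _) x)
    (mem_univ fun _ : Fin n ↦ a)
  simpa [sampleProb, Set.indicator_of_mem h] using hle

lemma const_mem_of_sampleProb_single_pos {a : Fin d}
    (h : 0 < sampleProb (Pi.single a 1) E) : (fun _ ↦ a) ∈ E := by
  obtain ⟨x, -, hx⟩ := exists_ne_zero_of_sum_ne_zero h.ne'
  have hxE : x ∈ E := Set.mem_of_indicator_ne_zero hx
  rw [Set.indicator_of_mem hxE, prod_ne_zero_iff] at hx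
  have hxa : x = fun _ ↦ a := funext fun i ↦ by
    simpa [Pi.single_apply] using hx i (mem_univ i)
  exact hxa ▸ hxE

lemma sampleProb_eq_sum_mul_indicator (p : Fin d → ℝ) (E : Set (Fin n → Fin d)) :
    sampleProb p E = ∑ x, (∏ i, p (x i)) * E.indicator 1 x := by
  refine sum_congr rfl fun x _ ↦ ?_
  by_cases hx : x ∈ E <;> simp [hx]

/-- Le Cam's two-point argument: two laws that agree on `S` cannot be told apart from a sample
contained in `S`. -/
lemma pow_sum_le_sampleProb_add_sampleProb {S : Finset (Fin d)} (hp : ∀ j, 0 ≤ p j)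
    (hp' : ∀ j, 0 ≤ p' j) (hS : ∀ j ∈ S, p j = p' j) (hEF : E ∪ F = Set.univ) :
    (∑ j ∈ S, p j) ^ n ≤ sampleProb p E + sampleProb p' F := by
  set U : Set (Fin n → Fin d) := {x | ∀ i, x i ∈ S}
  have hU : U ⊆ E ∪ F ∩ U := fun x hx ↦ by
    rcases hEF.ge (Set.mem_univ x) with hE | hF
    · exact .inl hE
    · exact .inr ⟨hF, hx⟩
  calc (∑ j ∈ S, p j) ^ n = sampleProb p U := (sampleProb_forall_mem p S).symm
    _ ≤ sampleProb p E + sampleProb p (F ∩ U) :=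
        (sampleProb_mono hp hU).trans (sampleProb_union_le hp)
    _ = sampleProb p E + sampleProb p' (F ∩ U) := by
        rw [sampleProb_congr (E := F ∩ U) fun x hx i ↦ hS _ (hx.2 i)]
    _ ≤ sampleProb p E + sampleProb p' F := by
        gcongr
        exact sampleProb_mono hp' Set.inter_subset_left

/-- Markov's inequality for the number of events `B k` that do not occur. -/
lemma sum_sampleProb_le_add_card_mul {ι : Type*} [Fintype ι] (hp : p ∈ stdSimplex ℝ (Fin d))
    (B : ι → Set (Fin n → Fin d)) {m : ℝ} (hm : 0 ≤ m) :
    ∑ k, sampleProb p (B k) ≤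
      m + Fintype.card ι * sampleProb p {x | m ≤ ∑ k, (B k).indicator 1 x} := by
  set E : Set (Fin n → Fin d) := {x | m ≤ ∑ k, (B k).indicator 1 x}
  have hcount (x : Fin n → Fin d) :
      ∑ k, (B k).indicator (1 : (Fin n → Fin d) → ℝ) x ≤ m + Fintype.card ι * E.indicator 1 x := by
    by_cases hx : x ∈ E
    · have hcard : ∑ k, (B k).indicator (1 : (Fin n → Fin d) → ℝ) x ≤ ∑ _k : ι, 1 :=
        sum_le_sum fun k _ ↦ Set.indicator_le_self' (fun _ _ ↦ zero_le_one) x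
      simp only [sum_const, card_univ, nsmul_eq_mul, mul_one] at hcard
      simp only [Set.indicator_of_mem hx, Pi.one_apply]
      linarith
    · simpa [hx] using (not_le.1 hx).le
  have htotal : ∑ x : Fin n → Fin d, ∏ i, p (x i) = 1 := by
    rw [← Fintype.sum_pow, hp.2, one_pow]
  calc ∑ k, sampleProb p (B k)
      = ∑ x, (∏ i, p (x i)) * ∑ k, (B k).indicator 1 x := by
        simp only [sampleProb_eq_sum_mul_indicator, mul_sum]
        exact sum_comm
    _ ≤ ∑ x, (∏ i, p (x i)) * (m + Fintype.card ι * E.indicator 1 x) :=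
        sum_le_sum fun x _ ↦
          mul_le_mul_of_nonneg_left (hcount x) (prod_nonneg fun _ _ ↦ hp.1 _)
    _ = m + Fintype.card ι * sampleProb p E := by
        simp only [mul_add, sum_add_distrib, ← sum_mul, htotal, one_mul,
          sampleProb_eq_sum_mul_indicator, mul_sum, mul_left_comm]

end SampleProb

section ChiSq

/-- The contribution to the χ²-divergence of a point that has mass `v` under the first law and mass
`q` under the second, with the same convention at `q = 0` as `chiSqE`. -/
noncomputable def chiSqTerm (v q : ℝ) : ℝ≥0∞ :=
  ENNReal.ofReal ((v - q) ^ 2) / ENNReal.ofReal q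

lemma ofReal_le_chiSqTerm {t v q : ℝ} (ht : 0 ≤ t) (hvq : v ≠ q) (h : t * q ≤ (v - q) ^ 2) :
    ENNReal.ofReal t ≤ chiSqTerm v q := by
  have hpos : 0 < (v - q) ^ 2 := by
    have := sub_ne_zero.2 hvq
    positivity
  rw [chiSqTerm, ENNReal.le_div_iff_mul_le (.inr (ENNReal.ofReal_pos.2 hpos).ne')
    (.inl ENNReal.ofReal_ne_top), ← ENNReal.ofReal_mul ht]
  exact ENNReal.ofReal_le_ofReal h

lemma ofReal_le_chiSqTerm_zero (q : ℝ) : ENNReal.ofReal q ≤ chiSqTerm 0 q := by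
  rcases le_or_gt q 0 with hq | hq
  · simp [ENNReal.ofReal_of_nonpos hq]
  · exact ofReal_le_chiSqTerm hq.le hq.ne (by linarith)

lemma ofReal_div_four_le_chiSqTerm_or {h : ℝ} (hh : 0 < h) (q : ℝ) :
    ENNReal.ofReal (h / 4) ≤ chiSqTerm h q ∨ ENNReal.ofReal (h / 4) ≤ chiSqTerm 0 q := by
  rcases lt_or_ge q (h / 4) with hq | hq
  · exact .inl (ofReal_le_chiSqTerm (by positivity) (by linarith) (by nlinarith))
  · exact .inr (ofReal_le_chiSqTerm (by positivity) (by linarith) (by nlinarith))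

variable {d : ℕ}

lemma sum_chiSqTerm_le_chiSqE (p q : Fin d → ℝ) (s : Finset (Fin d)) :
    ∑ j ∈ s, chiSqTerm (p j) (q j) ≤ chiSqE p q :=
  sum_le_sum_of_subset (subset_univ s)

lemma sum_erase_le_of_chiSqE_single_le {q : Fin d → ℝ} (hq : ∀ j, 0 ≤ q j) {a : Fin d} {t : ℝ}
    (ht : 0 ≤ t) (h : chiSqE (Pi.single a 1) q ≤ ENNReal.ofReal t) :
    ∑ j ∈ univ.erase a, q j ≤ t := by
  rw [← ENNReal.ofReal_le_ofReal_iff ht, ENNReal.ofReal_sum_of_nonneg fun j _ ↦ hq j]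
  calc ∑ j ∈ univ.erase a, ENNReal.ofReal (q j)
      ≤ ∑ j ∈ univ.erase a, chiSqTerm ((Pi.single a 1 : Fin d → ℝ) j) (q j) :=
        sum_le_sum fun j hj ↦ by
          rw [Pi.single_eq_of_ne (ne_of_mem_erase hj)]
          exact ofReal_le_chiSqTerm_zero (q j)
    _ ≤ chiSqE (Pi.single a 1) q := sum_chiSqTerm_le_chiSqE _ _ _
    _ ≤ ENNReal.ofReal t := h

lemma exists_ne_le_of_chiSqE_single_le (hd : 2 ≤ d) {q : Fin d → ℝ} (hq : ∀ j, 0 ≤ q j)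
    {a : Fin d} {t : ℝ} (ht : 0 ≤ t) (h : chiSqE (Pi.single a 1) q ≤ ENNReal.ofReal t) :
    ∃ j ≠ a, q j ≤ t / (d - 1) := by
  have hd' : (0 : ℝ) < d - 1 := by
    have : (2 : ℝ) ≤ d := mod_cast hd
    linarith
  have hcard : #(univ.erase a) = d - 1 := by simp
  have hne : (univ.erase a).Nonempty := card_pos.1 (by omega)
  have hsum : ∑ j ∈ univ.erase a, q j ≤ ∑ _j ∈ univ.erase a, t / (d - 1 : ℝ) := by
    rw [sum_const, hcard, nsmul_eq_mul, Nat.cast_pred (by omega), mul_div_cancel₀ _ hd'.ne']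
    exact sum_erase_le_of_chiSqE_single_le hq ht h
  obtain ⟨j, hj, hjt⟩ := exists_le_of_sum_le hne hsum
  exact ⟨j, ne_of_mem_erase hj, hjt⟩

lemma sampleProb_le_chiSqE_anti {n : ℕ} {p : Fin d → ℝ} (hp : ∀ j, 0 ≤ p j)
    (Φ : (Fin n → Fin d) → Fin d → ℝ) {s t : ℝ} (hst : s ≤ t) :
    sampleProb p {x | ENNReal.ofReal t ≤ chiSqE p (Φ x)} ≤
      sampleProb p {x | ENNReal.ofReal s ≤ chiSqE p (Φ x)} :=
  sampleProb_mono hp fun _ hx ↦ (ENNReal.ofReal_le_ofReal hst).trans hx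

end ChiSq

section Confidence

lemma mul_le_one_sub_exp_neg {y : ℝ} (hy0 : 0 ≤ y) (hy1 : y ≤ 1) :
    0.632 * y ≤ 1 - Real.exp (-y) := by
  have hconv := convexOn_exp.2 (Set.mem_univ 0) (Set.mem_univ (-1)) (sub_nonneg.2 hy1) hy0
    (sub_add_cancel 1 y)
  simp only [smul_eq_mul, mul_zero, zero_add, mul_neg, mul_one, Real.exp_zero] at hconv
  nlinarith [Real.exp_neg_one_lt_d9]

lemma ofReal_le_chiSqTerm_one_sub_exp_neg {c y q : ℝ} (hc : 0 < c) (hcy : 6.32 * c ≤ y)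
    (hy : y ≤ 1) (hq : q ≤ 2 * c) :
    ENNReal.ofReal (y ^ 2 / (25 * c)) ≤ chiSqTerm (1 - Real.exp (-y)) q := by
  have hexp := mul_le_one_sub_exp_neg (by linarith) hy
  have hgap : 0.3 * y ≤ 1 - Real.exp (-y) - q := by linarith
  refine ofReal_le_chiSqTerm (by positivity) (by intro h; linarith) ?_
  calc y ^ 2 / (25 * c) * q ≤ y ^ 2 / (25 * c) * (2 * c) := by gcongr
    _ = 0.08 * y ^ 2 := by field_simp; ring
    _ ≤ (0.3 * y) ^ 2 := by nlinarith [sq_nonneg y]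
    _ ≤ (1 - Real.exp (-y) - q) ^ 2 := by gcongr; linarith

theorem exists_exp_neg_le_sampleProb_chiSqE {n d : ℕ} (hd : 2 ≤ d) {κ L : ℝ} (hκ : 0 < κ)
    (hκL : 6.32 * κ ≤ L) (hLn : L ≤ n) {Φ : (Fin n → Fin d) → Fin d → ℝ} {a : Fin d}
    (hΦ : ∀ j, 0 ≤ Φ (fun _ ↦ a) j)
    (ha : chiSqE (Pi.single a 1) (Φ fun _ ↦ a) ≤ ENNReal.ofReal (κ * d / n)) :
    ∃ p ∈ stdSimplex ℝ (Fin d), Real.exp (-L) ≤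
      sampleProb p {x | ENNReal.ofReal (L ^ 2 / (25 * κ * n)) ≤ chiSqE p (Φ x)} := by
  have hn : (0 : ℝ) < n := by linarith
  have hd' : (2 : ℝ) ≤ d := mod_cast hd
  obtain ⟨j, hja, hj⟩ := exists_ne_le_of_chiSqE_single_le hd hΦ (by positivity) ha
  have hq : Φ (fun _ ↦ a) j ≤ 2 * (κ / n) := by
    refine hj.trans ?_
    rw [div_le_iff₀ (by linarith), mul_div_right_comm, mul_comm 2, mul_assoc]
    gcongr
    linarith
  set r := Real.exp (-(L / n))
  have hr1 : r ≤ 1 := Real.exp_le_one_iff.2 (by rw [neg_nonpos]; apply div_nonneg <;> linarith)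
  set p : Fin d → ℝ := r • Pi.single a 1 + (1 - r) • Pi.single j 1
  have hp : p ∈ stdSimplex ℝ (Fin d) :=
    convex_stdSimplex ℝ _ (single_mem_stdSimplex ℝ a) (single_mem_stdSimplex ℝ j)
      (Real.exp_nonneg _) (sub_nonneg.2 hr1) (add_sub_cancel r 1)
  have hpa : p a ^ n = Real.exp (-L) := by
    have : p a = r := by simp [p, hja.symm]
    rw [this, ← Real.exp_nat_mul, mul_neg, mul_div_cancel₀ _ hn.ne']
  have hpj : p j = 1 - r := by simp [p, hja]
  refine ⟨p, hp, hpa ▸ pow_le_sampleProb_of_const_mem hp.1 ?_⟩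
  calc ENNReal.ofReal (L ^ 2 / (25 * κ * n))
      = ENNReal.ofReal ((L / n) ^ 2 / (25 * (κ / n))) := by
        congr 1
        field_simp
    _ ≤ chiSqTerm (p j) (Φ (fun _ ↦ a) j) := by
        rw [hpj]
        refine ofReal_le_chiSqTerm_one_sub_exp_neg (by positivity) ?_ ((div_le_one hn).2 hLn) hq
        rw [← mul_div_assoc]
        gcongr
    _ ≤ chiSqE p (Φ fun _ ↦ a) := by
        simpa using sum_chiSqTerm_le_chiSqE p (Φ fun _ ↦ a) {j}

end Confidence

section Dimension

variable {ι : Type*} {n d : ℕ} (e : Option (ι × Bool) ↪ Fin d) {h : ℝ}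

/-- The vertex `b` of the Assouad hypercube of laws: the points `e (some (k, false))` and
`e (some (k, true))` form the `k`-th pair, of which the one selected by `b k` has mass `h`, and
`e none` carries the remaining mass. -/
noncomputable def cubeLaw [Fintype ι] (h : ℝ) (b : ι → Bool) : Fin d → ℝ :=
  Pi.single (e none) (1 - Fintype.card ι * h) + ∑ k, Pi.single (e (some (k, b k))) h

/-- The samples on which the point `e (some (k, true))` alone contributes at least `h / 4` to the
divergence from the estimate to a vertex `b` of the hypercube with `b k = v`. -/
def largeLoss (h : ℝ) (Φ : (Fin n → Fin d) → Fin d → ℝ) (k : ι) (v : Bool) : Set (Fin n → Fin d) :=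
  {x | ENNReal.ofReal (h / 4) ≤ chiSqTerm (if v then h else 0) (Φ x (e (some (k, true))))}

lemma largeLoss_union_largeLoss_not (hh : 0 < h) (Φ : (Fin n → Fin d) → Fin d → ℝ) (k : ι)
    (v : Bool) : largeLoss e h Φ k v ∪ largeLoss e h Φ k (!v) = Set.univ := by
  refine Set.eq_univ_of_forall fun x ↦ ?_
  have hor := ofReal_div_four_le_chiSqTerm_or hh (Φ x (e (some (k, true))))
  cases v
  · simpa [largeLoss] using hor.symm
  · simpa [largeLoss] using hor

variable [Fintype ι]

lemma cubeLaw_apply_some (h : ℝ) (b : ι → Bool) (k : ι) (v : Bool) :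
    cubeLaw e h b (e (some (k, v))) = if b k = v then h else 0 := by
  have hne : e (some (k, v)) ≠ e none := by simp
  have hoff (k' : ι) (hk' : k' ≠ k) :
      (Pi.single (e (some (k', b k'))) h : Fin d → ℝ) (e (some (k, v))) = 0 :=
    Pi.single_eq_of_ne (by simp [hk'.symm]) _
  rw [cubeLaw, Pi.add_apply, Pi.single_eq_of_ne hne, zero_add, Finset.sum_apply,
    Fintype.sum_eq_single k hoff, Pi.single_apply]
  simp [eq_comm]

lemma sum_cubeLaw (h : ℝ) (b : ι → Bool) : ∑ j, cubeLaw e h b j = 1 := by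
  simp [cubeLaw, sum_add_distrib, sum_comm (s := univ (α := Fin d))]

lemma cubeLaw_mem_stdSimplex (hh : 0 ≤ h) (hcard : Fintype.card ι * h ≤ 1) (b : ι → Bool) :
    cubeLaw e h b ∈ stdSimplex ℝ (Fin d) := by
  have hnonneg : 0 ≤ cubeLaw e h b :=
    add_nonneg (Pi.single_nonneg.2 (sub_nonneg.2 hcard))
      (sum_nonneg fun _ _ ↦ Pi.single_nonneg.2 hh)
  exact ⟨hnonneg, sum_cubeLaw e h b⟩

lemma cubeLaw_update_apply [DecidableEq ι] (h : ℝ) (b : ι → Bool) (k : ι) (v : Bool) {j : Fin d}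
    (hj : ∀ w, j ≠ e (some (k, w))) :
    cubeLaw e h (Function.update b k v) j = cubeLaw e h b j := by
  simp only [cubeLaw, Pi.add_apply, Finset.sum_apply]
  congr 1
  refine sum_congr rfl fun k' _ ↦ ?_
  rcases eq_or_ne k' k with rfl | hk'
  · rw [Pi.single_eq_of_ne (hj _), Pi.single_eq_of_ne (hj _)]
  · rw [Function.update_of_ne hk']

lemma sum_compl_pair_cubeLaw (h : ℝ) (b : ι → Bool) (k : ι) :
    ∑ j ∈ {e (some (k, true)), e (some (k, false))}ᶜ, cubeLaw e h b j = 1 - h := by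
  have hpair : ∑ j ∈ {e (some (k, true)), e (some (k, false))}, cubeLaw e h b j = h := by
    rw [sum_pair (by simp), cubeLaw_apply_some, cubeLaw_apply_some]
    cases b k <;> simp
  rw [eq_sub_iff_add_eq, ← sum_cubeLaw e h b, ← sum_compl_add_sum, hpair]

lemma half_le_sampleProb_largeLoss_add [DecidableEq ι] (hh : 0 < h)
    (hcard : Fintype.card ι * h ≤ 1) (hn : n * h ≤ 1 / 2)
    (Φ : (Fin n → Fin d) → Fin d → ℝ) (b : ι → Bool) (k : ι) :
    1 / 2 ≤ sampleProb (cubeLaw e h b) (largeLoss e h Φ k (b k)) +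
      sampleProb (cubeLaw e h (Function.update b k (!b k))) (largeLoss e h Φ k (!b k)) := by
  have hh1 : h ≤ 1 := by
    have : (1 : ℝ) ≤ Fintype.card ι := mod_cast Fintype.card_pos_iff.2 ⟨k⟩
    nlinarith
  calc (1 / 2 : ℝ) ≤ 1 + n * -h := by linarith
    _ ≤ (1 + -h) ^ n := one_add_mul_le_pow (by linarith) n
    _ = (∑ j ∈ {e (some (k, true)), e (some (k, false))}ᶜ, cubeLaw e h b j) ^ n := by
        rw [sum_compl_pair_cubeLaw, sub_eq_add_neg]
    _ ≤ _ := by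
        refine pow_sum_le_sampleProb_add_sampleProb (cubeLaw_mem_stdSimplex e hh.le hcard _).1
          (cubeLaw_mem_stdSimplex e hh.le hcard _).1 (fun j hj ↦ ?_)
          (largeLoss_union_largeLoss_not e hh Φ k (b k))
        refine (cubeLaw_update_apply e h b k _ fun w hw ↦ ?_).symm
        cases w <;> simp [hw] at hj

lemma card_div_four_le_sum_sampleProb_largeLoss [DecidableEq ι] (hh : 0 < h)
    (hcard : Fintype.card ι * h ≤ 1) (hn : n * h ≤ 1 / 2)
    (Φ : (Fin n → Fin d) → Fin d → ℝ) (k : ι) :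
    (Fintype.card (ι → Bool) / 4 : ℝ) ≤
      ∑ b : ι → Bool, sampleProb (cubeLaw e h b) (largeLoss e h Φ k (b k)) := by
  set P : (ι → Bool) → ℝ := fun b ↦ sampleProb (cubeLaw e h b) (largeLoss e h Φ k (b k))
  have hflip : Function.Involutive fun b : ι → Bool ↦ Function.update b k (!b k) :=
    fun b ↦ by simp
  have hpair : ∑ _b : ι → Bool, (1 / 2 : ℝ) ≤
      ∑ b, (P b + P (Function.update b k (!b k))) :=
    sum_le_sum fun b _ ↦ by
      simpa [P] using half_le_sampleProb_largeLoss_add e hh hcard hn Φ b k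
  have hsymm : ∑ b, P (Function.update b k (!b k)) = ∑ b, P b := Equiv.sum_comp hflip.toPerm P
  rw [sum_add_distrib, hsymm] at hpair
  simp only [sum_const, card_univ, nsmul_eq_mul] at hpair
  linarith

lemma exists_card_div_four_le_sum_sampleProb_largeLoss (hh : 0 < h)
    (hcard : Fintype.card ι * h ≤ 1) (hn : n * h ≤ 1 / 2)
    (Φ : (Fin n → Fin d) → Fin d → ℝ) :
    ∃ b : ι → Bool, (Fintype.card ι / 4 : ℝ) ≤
      ∑ k, sampleProb (cubeLaw e h b) (largeLoss e h Φ k (b k)) := by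
  classical
  have hsum : ∑ _b : ι → Bool, (Fintype.card ι / 4 : ℝ) ≤
      ∑ b : ι → Bool, ∑ k, sampleProb (cubeLaw e h b) (largeLoss e h Φ k (b k)) := by
    rw [sum_comm]
    calc ∑ _b : ι → Bool, (Fintype.card ι / 4 : ℝ)
        = ∑ _k : ι, (Fintype.card (ι → Bool) / 4 : ℝ) := by
          simp only [sum_const, card_univ, nsmul_eq_mul]
          ring
      _ ≤ _ := sum_le_sum fun k _ ↦
          card_div_four_le_sum_sampleProb_largeLoss e hh hcard hn Φ k
  obtain ⟨b, -, hb⟩ := exists_le_of_sum_le univ_nonempty hsum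
  exact ⟨b, hb⟩

lemma ofReal_sum_indicator_largeLoss_le_chiSqE (hh : 0 ≤ h)
    (Φ : (Fin n → Fin d) → Fin d → ℝ) (b : ι → Bool) (x : Fin n → Fin d) :
    ENNReal.ofReal ((∑ k, (largeLoss e h Φ k (b k)).indicator 1 x) * (h / 4)) ≤
      chiSqE (cubeLaw e h b) (Φ x) := by
  let f : ι ↪ Fin d := ⟨fun k ↦ e (some (k, true)), fun k k' hk ↦ by simpa using hk⟩
  have hterm (k : ι) : ENNReal.ofReal ((largeLoss e h Φ k (b k)).indicator 1 x * (h / 4)) ≤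
      chiSqTerm (cubeLaw e h b (f k)) (Φ x (f k)) := by
    by_cases hx : x ∈ largeLoss e h Φ k (b k)
    · have hfk : cubeLaw e h b (f k) = if b k then h else 0 := cubeLaw_apply_some e h b k true
      rw [Set.indicator_of_mem hx, Pi.one_apply, one_mul, hfk]
      exact hx
    · simp [hx]
  have hnonneg (k : ι) : 0 ≤ (largeLoss e h Φ k (b k)).indicator 1 x * (h / 4) :=
    mul_nonneg (Set.indicator_apply_nonneg fun _ ↦ zero_le_one) (by positivity)
  rw [sum_mul, ENNReal.ofReal_sum_of_nonneg fun k _ ↦ hnonneg k]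
  calc _ ≤ ∑ k, chiSqTerm (cubeLaw e h b (f k)) (Φ x (f k)) := sum_le_sum fun k _ ↦ hterm k
    _ = ∑ j ∈ univ.map f, chiSqTerm (cubeLaw e h b j) (Φ x j) := by rw [sum_map]
    _ ≤ chiSqE (cubeLaw e h b) (Φ x) := sum_chiSqTerm_le_chiSqE _ _ _

lemma exists_le_sampleProb_cubeLaw_chiSqE [Nonempty ι] (hh : 0 < h)
    (hcard : Fintype.card ι * h ≤ 1) (hn : n * h ≤ 1 / 2)
    (Φ : (Fin n → Fin d) → Fin d → ℝ) :
    ∃ b : ι → Bool, 0.15 ≤ sampleProb (cubeLaw e h b)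
      {x | ENNReal.ofReal (Fintype.card ι * h / 40) ≤ chiSqE (cubeLaw e h b) (Φ x)} := by
  obtain ⟨b, hb⟩ := exists_card_div_four_le_sum_sampleProb_largeLoss e hh hcard hn Φ
  have hp := cubeLaw_mem_stdSimplex e hh.le hcard b
  have hmarkov := sum_sampleProb_le_add_card_mul hp (fun k ↦ largeLoss e h Φ k (b k))
    (m := Fintype.card ι / 10) (by positivity)
  have hι : (0 : ℝ) < Fintype.card ι := mod_cast Fintype.card_pos
  have hmany : 0.15 ≤ sampleProb (cubeLaw e h b)
      {x | (Fintype.card ι / 10 : ℝ) ≤ ∑ k, (largeLoss e h Φ k (b k)).indicator 1 x} :=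
    le_of_mul_le_mul_left (by linarith) hι
  refine ⟨b, hmany.trans (sampleProb_mono hp.1 fun x hx ↦ ?_)⟩
  refine (ENNReal.ofReal_le_ofReal ?_).trans
    (ofReal_sum_indicator_largeLoss_le_chiSqE e hh.le Φ b x)
  calc Fintype.card ι * h / 40 = Fintype.card ι / 10 * (h / 4) := by ring
    _ ≤ _ := mul_le_mul_of_nonneg_right hx (by positivity)

end Dimension

theorem exists_le_sampleProb_chiSqE {n d : ℕ} (hd : 3 ≤ d) (hdn : d ≤ n)
    (Φ : (Fin n → Fin d) → Fin d → ℝ) :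
    ∃ p ∈ stdSimplex ℝ (Fin d),
      0.15 ≤ sampleProb p {x | ENNReal.ofReal (d / (320 * n)) ≤ chiSqE p (Φ x)} := by
  obtain ⟨K, hKd, hdK⟩ : ∃ K : ℕ, 2 * K + 1 ≤ d ∧ d ≤ 4 * K := ⟨(d - 1) / 2, by omega, by omega⟩
  have : NeZero K := ⟨by omega⟩
  obtain ⟨e⟩ : Nonempty (Option (Fin K × Bool) ↪ Fin d) :=
    Function.Embedding.nonempty_of_card_le (by
      simp only [Fintype.card_option, Fintype.card_prod, Fintype.card_fin, Fintype.card_bool]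
      omega)
  have hn : (0 : ℝ) < n := mod_cast (by omega : 0 < n)
  have hKn : (K : ℝ) ≤ 2 * n := mod_cast (by omega : K ≤ 2 * n)
  have hcard : Fintype.card (Fin K) * (1 / (2 * n) : ℝ) ≤ 1 := by
    rw [Fintype.card_fin, mul_one_div]
    exact (div_le_one (by positivity)).2 hKn
  obtain ⟨b, hb⟩ := exists_le_sampleProb_cubeLaw_chiSqE e (h := 1 / (2 * n)) (by positivity) hcard
    (by apply le_of_eq; field_simp) Φ
  have hp := cubeLaw_mem_stdSimplex e (by positivity) hcard b
  refine ⟨_, hp, hb.trans (sampleProb_le_chiSqE_anti hp.1 Φ ?_)⟩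
  calc (d / (320 * n) : ℝ) ≤ (4 * K : ℕ) / (320 * n) := by gcongr
    _ = Fintype.card (Fin K) * (1 / (2 * n)) / 40 := by
        rw [Fintype.card_fin]
        push_cast
        field_simp
        ring

lemma exp_neg_le_of_six_le {x : ℝ} (hx : 6 ≤ x) : Real.exp (-x) ≤ 0.15 := by
  have hexp : 7 ≤ Real.exp x := by linarith [Real.add_one_le_exp x]
  calc Real.exp (-x) = (Real.exp x)⁻¹ := Real.exp_neg x
    _ ≤ 7⁻¹ := by gcongr
    _ ≤ 0.15 := by norm_num

theorem lower_bound_conf_indep_general (n d : ℕ) (hdn : d ≤ n) (hd : 2 ≤ d)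
    (κ : ℝ) (hκ : 1 ≤ κ)
    (Φ : (Fin n → Fin d) → (Fin d → ℝ)) (hΦ : ∀ x j, 0 ≤ Φ x j) (a : Fin d)
    (ha : 0 < sampleProb (Pi.single a 1)
      {x | chiSqE (Pi.single a 1) (Φ x) ≤ ENNReal.ofReal (κ * d / n)})
    (δ : ℝ) (hδl : Real.exp (-(n : ℝ)) < δ) (hδu : δ < Real.exp (-(6.32 * κ))) :
    ∃ p : Fin d → ℝ, (∀ j, 0 ≤ p j) ∧ (∑ j, p j = 1) ∧
      δ ≤ sampleProb p {x |
        ENNReal.ofReal ((1 / (10000 * κ)) * (((d : ℝ) + Real.log (1 / δ) ^ 2) / n)) ≤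
          chiSqE p (Φ x)} := by
  have hδ : 0 < δ := (Real.exp_pos _).trans hδl
  have hn : (0 : ℝ) < n := mod_cast (by omega : 0 < n)
  set L := Real.log (1 / δ) with hL
  have hδL : δ = Real.exp (-L) := by simp [hL, Real.exp_log hδ]
  rw [hδL, Real.exp_lt_exp, neg_lt_neg_iff] at hδl hδu
  rcases le_total (d : ℝ) (L ^ 2) with hdL | hLd
  · obtain ⟨p, hp, hpL⟩ := exists_exp_neg_le_sampleProb_chiSqE hd (by linarith) hδu.le hδl.le
      (hΦ _) (const_mem_of_sampleProb_single_pos ha)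
    refine ⟨p, hp.1, hp.2, hδL.trans_le (hpL.trans (sampleProb_le_chiSqE_anti hp.1 Φ ?_))⟩
    calc 1 / (10000 * κ) * ((d + L ^ 2) / n) ≤ 1 / (10000 * κ) * ((400 * L ^ 2) / n) := by
          gcongr
          linarith [sq_nonneg L]
      _ = L ^ 2 / (25 * κ * n) := by field_simp; ring
  · have hd3 : 3 ≤ d := by
      have : (2 : ℝ) < d := by nlinarith
      exact_mod_cast this
    obtain ⟨p, hp, hpd⟩ := exists_le_sampleProb_chiSqE hd3 hdn Φ
    have hδ15 : δ ≤ 0.15 := hδL.trans_le (exp_neg_le_of_six_le (by linarith))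
    refine ⟨p, hp.1, hp.2, hδ15.trans (hpd.trans (sampleProb_le_chiSqE_anti hp.1 Φ ?_))⟩
    calc 1 / (10000 * κ) * ((d + L ^ 2) / n) ≤ 1 / (10000 * 1) * ((31.25 * d) / n) := by
          gcongr
          linarith
      _ = d / (320 * n) := by field_simp; ring

theorem lower_bound_conf_indep (n d : ℕ) (hdn : d ≤ n) (hd : 4000 ≤ d)
    (κ : ℝ) (hκ : 1 ≤ κ)
    (Φ : (Fin n → Fin d) → (Fin d → ℝ))
    (hΦ : ∀ x, (∀ j, 0 ≤ Φ x j) ∧ ∑ j, Φ x j = 1)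
    (hgood : ∀ p : Fin d → ℝ, (∀ j, 0 ≤ p j) → ∑ j, p j = 1 →
      0 < sampleProb p {x | chiSqE p (Φ x) ≤ ENNReal.ofReal (κ * d / n)})
    (δ : ℝ) (hδl : Real.exp (-(n : ℝ)) < δ) (hδu : δ < Real.exp (-(6.32 * κ))) :
    ∃ p : Fin d → ℝ, (∀ j, 0 ≤ p j) ∧ (∑ j, p j = 1) ∧
      δ ≤ sampleProb p {x |
        ENNReal.ofReal ((1 / (10000 * κ)) * (((d : ℝ) + Real.log (1 / δ) ^ 2) / n)) ≤
          chiSqE p (Φ x)} := by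
  exact lower_bound_conf_indep_general n d hdn (by omega) κ hκ Φ (fun x ↦ (hΦ x).1) ⟨0, by omega⟩
    (hgood _ (single_mem_stdSimplex ℝ _).1 (single_mem_stdSimplex ℝ _).2) δ hδl hδu
end

section
/- Let n ≥ d ≥ 2 be integers and δ ∈ (e^{-n}, e^{-1}). There exists a set F ⊂ Δ_d of d distributions, each supported on at most 2 points, such that for any estimator Φ : {1,…,d}^n → Δ_d there exists P ∈ F for which, writing P̂_n = Φ(X_1, …, X_n) for an i.i.d. sample from P, the probability that χ²(P, P̂_n) ≥ 0.15 · ( √d·log(1/δ)/n + d·log²(1/δ)/n² ) is at least δ. -/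
open Finset
open scoped ENNReal

/-!
Let `t = log (1 / δ) / n`. All the mixtures of a fixed point mass at `z` with other point masses, in
proportion `exp (-t)` to `1 - exp (-t)`, give the constant sample `z` probability at least
`exp (-t) ^ n = δ`. On that sample the estimator outputs a single distribution, so it suffices that
no distribution is χ²-close to all the mixtures at once, which follows by averaging the divergences
and applying Cauchy–Schwarz.

For `d = 2` and `t` near `1` the mixtures lie too close together. There two coins of bias
`exp (-2 * t)` and `1 - exp (-2 * t)` are far apart in χ² and still cannot be told apart by a test
with sum of error probabilities below `2 * δ`.
-/

section ChiSq

variable {ι : Type*} {d : ℕ} {p q : Fin d → ℝ}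

lemma eq_zero_of_chiSqE_ne_top (h : chiSqE p q ≠ ⊤) {j : Fin d} (hj : q j = 0) : p j = 0 := by
  by_contra hp
  refine h (ENNReal.sum_eq_top.2 ⟨j, mem_univ j, ?_⟩)
  have hpos : 0 < (p j - q j) ^ 2 := by rw [hj, sub_zero]; positivity
  rw [hj, ENNReal.ofReal_zero, ← hj]
  exact ENNReal.div_zero (ENNReal.ofReal_pos.2 hpos).ne'

lemma chiSqE_eq_ofReal (hp : ∑ j, p j = 1) (hq : q ∈ stdSimplex ℝ (Fin d))
    (h : chiSqE p q ≠ ⊤) : chiSqE p q = ENNReal.ofReal (∑ j, p j ^ 2 / q j - 1) := by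
  have hterm (j : Fin d) : (p j - q j) ^ 2 / q j = p j ^ 2 / q j - 2 * p j + q j := by
    by_cases hj : q j = 0
    · simp [hj, eq_zero_of_chiSqE_ne_top h hj]
    · field_simp
      ring
  have hsum : ∑ j, (p j - q j) ^ 2 / q j = ∑ j, p j ^ 2 / q j - 1 := by
    simp only [hterm, sum_add_distrib, sum_sub_distrib, ← mul_sum, hp, hq.2]
    ring
  rw [← hsum, ENNReal.ofReal_sum_of_nonneg fun j _ => div_nonneg (sq_nonneg _) (hq.1 j)]
  refine sum_congr rfl fun j _ => ?_
  obtain hj | hj := (hq.1 j).eq_or_lt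
  · simp [← hj, eq_zero_of_chiSqE_ne_top h hj.symm]
  · rw [ENNReal.ofReal_div_of_pos hj]

/-- No single probability vector is at χ²-divergence less than `T` from all members of the
family `P`: its χ²-radius is at least `T`. -/
def IsChiSqSeparated (T : ℝ) (P : ι → Fin d → ℝ) : Prop :=
  ∀ q ∈ stdSimplex ℝ (Fin d), ∃ j, ENNReal.ofReal T ≤ chiSqE (P j) q

/- Averaging `∑ k, P j k ^ 2 / q k` over `j` with weights `w` and applying Cauchy–Schwarz against
`∑ k, q k = 1` removes `q`. For the best `w` nothing is lost, by minimax duality. -/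
lemma isChiSqSeparated_of_le_sq_sum [Fintype ι] {P : ι → Fin d → ℝ} {T : ℝ} {w : ι → ℝ}
    (hP : ∀ j, ∑ k, P j k = 1) (hw : w ∈ stdSimplex ℝ ι) (f : Fin d → ℝ)
    (hf : ∀ k, f k ^ 2 ≤ ∑ j, w j * P j k ^ 2) (hT : 1 + T ≤ (∑ k, f k) ^ 2) :
    IsChiSqSeparated T P := by
  intro q hq
  by_contra! hlt
  have hfin (j : ι) : chiSqE (P j) q ≠ ⊤ := (hlt j).ne_top
  have hmoment (j : ι) : ∑ k, P j k ^ 2 / q k < 1 + T := by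
    have h := hlt j
    rw [chiSqE_eq_ofReal (hP j) hq (hfin j)] at h
    linarith [lt_of_not_ge fun hge => h.not_ge (ENNReal.ofReal_le_ofReal hge)]
  have hmean : ∑ j, w j * ∑ k, P j k ^ 2 / q k < 1 + T :=
    (convex_Iio (1 + T)).sum_mem (fun j _ => hw.1 j) hw.2 fun j _ => hmoment j
  have hnonneg (k : Fin d) : 0 ≤ ∑ j, w j * P j k ^ 2 :=
    sum_nonneg fun j _ => mul_nonneg (hw.1 j) (sq_nonneg _)
  have hcauchy : (∑ k, f k) ^ 2 ≤ (∑ k, q k) * ∑ k, (∑ j, w j * P j k ^ 2) / q k := by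
    refine sum_sq_le_sum_mul_sum_of_sq_le_mul _ (fun k _ => hq.1 k)
      (fun k _ => div_nonneg (hnonneg k) (hq.1 k)) fun k _ => (hf k).trans ?_
    by_cases hk : q k = 0
    · simp [hk, eq_zero_of_chiSqE_ne_top (hfin _) hk]
    · rw [mul_div_cancel₀ _ hk]
  have hswap : ∑ k, (∑ j, w j * P j k ^ 2) / q k = ∑ j, w j * ∑ k, P j k ^ 2 / q k := by
    simp only [sum_div, mul_sum, mul_div_assoc]
    exact sum_comm
  rw [hq.2, one_mul, hswap] at hcauchy
  linarith

end ChiSq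

section Reduction

variable {ι : Type*} {n d : ℕ} {T δ : ℝ}

/-- Whatever the estimator based on `n` samples, some member of the family `P` makes it err by at
least `T` in χ²-divergence with probability at least `δ`. -/
def ForcesChiSqLoss (n : ℕ) (T δ : ℝ) (P : ι → Fin d → ℝ) : Prop :=
  ∀ Φ : (Fin n → Fin d) → Fin d → ℝ, (∀ x, Φ x ∈ stdSimplex ℝ (Fin d)) →
    ∃ j, δ ≤ sampleProb (P j) {x | ENNReal.ofReal T ≤ chiSqE (P j) (Φ x)}

lemma indicator_prod_nonneg {p : Fin d → ℝ} (hp : ∀ k, 0 ≤ p k) (E : Set (Fin n → Fin d))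
    (x : Fin n → Fin d) : 0 ≤ E.indicator (fun y => ∏ i, p (y i)) x :=
  Set.indicator_nonneg (fun y _ => prod_nonneg fun i _ => hp (y i)) x

lemma prod_le_sampleProb {p : Fin d → ℝ} (hp : ∀ k, 0 ≤ p k) {E : Set (Fin n → Fin d)}
    {x : Fin n → Fin d} (hx : x ∈ E) : ∏ i, p (x i) ≤ sampleProb p E :=
  (Set.indicator_of_mem hx fun y => ∏ i, p (y i)).ge.trans
    (single_le_sum (fun y _ => indicator_prod_nonneg hp E y) (mem_univ x))

lemma IsChiSqSeparated.forcesChiSqLoss_of_le_prod {P : ι → Fin d → ℝ} (hP : IsChiSqSeparated T P)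
    (hP₀ : ∀ j k, 0 ≤ P j k) (x : Fin n → Fin d) (hx : ∀ j, δ ≤ ∏ i, P j (x i)) :
    ForcesChiSqLoss n T δ P := fun Φ hΦ =>
  (hP (Φ x) (hΦ x)).imp fun j hj => (hx j).trans (prod_le_sampleProb (hP₀ j) hj)

/-- The affinity `∑ min(p^{⊗n}, q^{⊗n}) = 1 - TV(p^{⊗n}, q^{⊗n})` of the laws of `n` samples: the
least possible sum of the two error probabilities of a test between `p` and `q`. -/
noncomputable def testAffinity (p q : Fin d → ℝ) (n : ℕ) : ℝ :=
  ∑ x : Fin n → Fin d, min (∏ i, p (x i)) (∏ i, q (x i))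

lemma testAffinity_le_sampleProb_add {p q : Fin d → ℝ} (hp : ∀ k, 0 ≤ p k) (hq : ∀ k, 0 ≤ q k)
    {A B : Set (Fin n → Fin d)} (hAB : ∀ x, x ∈ A ∨ x ∈ B) :
    testAffinity p q n ≤ sampleProb p A + sampleProb q B := by
  rw [testAffinity, sampleProb, sampleProb, ← sum_add_distrib]
  refine sum_le_sum fun x _ => ?_
  obtain hx | hx := hAB x
  · rw [Set.indicator_of_mem hx]
    exact (min_le_left _ _).trans (le_add_of_nonneg_right (indicator_prod_nonneg hq B x))
  · rw [Set.indicator_of_mem hx (fun y => ∏ i, q (y i))]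
    exact (min_le_right _ _).trans (le_add_of_nonneg_left (indicator_prod_nonneg hp A x))

lemma IsChiSqSeparated.forcesChiSqLoss_of_le_testAffinity {P : Fin 2 → Fin d → ℝ}
    (hP : IsChiSqSeparated T P) (hP₀ : ∀ j k, 0 ≤ P j k)
    (hδ : 2 * δ ≤ testAffinity (P 0) (P 1) n) : ForcesChiSqLoss n T δ P := by
  intro Φ hΦ
  by_contra! hlt
  have hcover : testAffinity (P 0) (P 1) n ≤
      sampleProb (P 0) {x | ENNReal.ofReal T ≤ chiSqE (P 0) (Φ x)} +
        sampleProb (P 1) {x | ENNReal.ofReal T ≤ chiSqE (P 1) (Φ x)} :=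
    testAffinity_le_sampleProb_add (hP₀ 0) (hP₀ 1) fun x =>
      Fin.exists_fin_two.1 (hP (Φ x) (hΦ x))
  linarith [hlt 0, hlt 1]

lemma testAffinity_mul_le {p q : Fin d → ℝ} (hp : ∀ k, 0 ≤ p k) (hq : ∀ k, 0 ≤ q k) (m n : ℕ) :
    testAffinity p q m * testAffinity p q n ≤ testAffinity p q (m + n) := by
  have hprod {r : Fin d → ℝ} (hr : ∀ k, 0 ≤ r k) {l : ℕ} (x : Fin l → Fin d) :
      0 ≤ ∏ i, r (x i) := prod_nonneg fun i _ => hr (x i)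
  simp only [testAffinity]
  rw [← (Fin.appendEquiv m n).sum_comp, Fintype.sum_prod_type, sum_mul_sum]
  refine sum_le_sum fun x _ => sum_le_sum fun y _ => ?_
  simp only [Fin.appendEquiv_apply, Fin.prod_univ_add, Fin.append_left, Fin.append_right]
  have hmin : 0 ≤ min (∏ i, p (y i)) (∏ i, q (y i)) := le_min (hprod hp y) (hprod hq y)
  exact le_min
    (mul_le_mul (min_le_left _ _) (min_le_left _ _) hmin (hprod hp x))
    (mul_le_mul (min_le_right _ _) (min_le_right _ _) hmin (hprod hq x))

end Reduction

section Star

variable {n d : ℕ} {a T δ : ℝ}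

/-- The mixtures of the point mass at the centre `z`, of weight `1 - a`, with the point masses at
the points `j`; for `j = z` this is the point mass itself. -/
noncomputable def starFamily (z : Fin d) (a : ℝ) (j : Fin d) : Fin d → ℝ :=
  (1 - a) • Pi.single z 1 + a • Pi.single j 1

lemma starFamily_mem_stdSimplex (z : Fin d) (ha : a ∈ Set.Icc 0 1) (j : Fin d) :
    starFamily z a j ∈ stdSimplex ℝ (Fin d) :=
  convex_stdSimplex ℝ (Fin d) (single_mem_stdSimplex ℝ z) (single_mem_stdSimplex ℝ j)
    (sub_nonneg.2 ha.2) ha.1 (sub_add_cancel 1 a)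

lemma starFamily_injective (z : Fin d) (ha : a ≠ 0) : Function.Injective (starFamily z a) := by
  intro i j hij
  by_contra hne
  have hi := congrFun hij i
  simp [starFamily, Pi.single_apply, hne, ha] at hi

lemma card_starFamily_support_le (z j : Fin d) : #{k | starFamily z a j k ≠ 0} ≤ 2 := by
  refine (card_le_card (t := {z, j}) fun k hk => ?_).trans card_le_two
  by_contra hkzj
  simp only [mem_insert, mem_singleton, not_or] at hkzj
  simp [starFamily, Pi.single_apply, hkzj.1, hkzj.2] at hk

lemma starFamily_self (z : Fin d) : starFamily z a z z = 1 := by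
  simp [starFamily]

lemma starFamily_center {z j : Fin d} (hj : j ≠ z) : starFamily z a j z = 1 - a := by
  simp [starFamily, hj.symm]

lemma starFamily_leaf {z j : Fin d} (hj : j ≠ z) : starFamily z a j j = a := by
  simp [starFamily, hj]

lemma forcesChiSqLoss_starFamily (z : Fin d) (ha : a ∈ Set.Icc 0 1) (hδ : δ ≤ (1 - a) ^ n)
    (hT : IsChiSqSeparated T (starFamily z a)) : ForcesChiSqLoss n T δ (starFamily z a) := by
  refine hT.forcesChiSqLoss_of_le_prod (fun j => (starFamily_mem_stdSimplex z ha j).1)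
    (fun _ => z) fun j => ?_
  have hcenter : 1 - a ≤ starFamily z a j z := by
    obtain rfl | hj := eq_or_ne j z
    · linarith [starFamily_self (a := a) j, ha.1]
    · exact (starFamily_center hj).ge
  rw [prod_const, card_univ, Fintype.card_fin]
  exact hδ.trans (pow_le_pow_left₀ (sub_nonneg.2 ha.2) hcenter n)

lemma sum_ite_eq_add_mul {ι : Type*} [Fintype ι] [DecidableEq ι] (z : ι) (x y : ℝ) :
    ∑ j, (if j = z then x else y) = x + (Fintype.card ι - 1) * y := by
  have hcard : 1 ≤ Fintype.card ι := Fintype.card_pos_iff.2 ⟨z⟩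
  simp [sum_ite, filter_eq', filter_ne', card_erase_of_mem, Nat.cast_sub hcard]

/- The leaves share the weight `μ` equally and the centre gets `1 - μ`; `α` and `γ` bound the
contributions of the centre and of the leaves. -/
lemma isChiSqSeparated_starFamily (hd : 2 ≤ d) (z : Fin d) {μ α γ : ℝ} (hμ : μ ∈ Set.Icc 0 1)
    (hα : α ^ 2 ≤ 1 - μ + μ * (1 - a) ^ 2) (hγ : γ ^ 2 ≤ (d - 1) * μ * a ^ 2)
    (hT : 1 + T ≤ (α + γ) ^ 2) : IsChiSqSeparated T (starFamily z a) := by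
  have hd₀ : (0 : ℝ) < d - 1 := by
    have : (2 : ℝ) ≤ d := by exact_mod_cast hd
    linarith
  let w : Fin d → ℝ := fun j => if j = z then 1 - μ else μ / (d - 1)
  have hw : w ∈ stdSimplex ℝ (Fin d) := by
    refine ⟨fun j => ?_, ?_⟩
    · simp only [w]
      split_ifs
      exacts [sub_nonneg.2 hμ.2, div_nonneg hμ.1 hd₀.le]
    · simp only [w, sum_ite_eq_add_mul, Fintype.card_fin]
      field_simp
      ring
  have hsum (j : Fin d) : ∑ k, starFamily z a j k = 1 := by
    simp [starFamily, sum_add_distrib, ← mul_sum]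
  refine isChiSqSeparated_of_le_sq_sum hsum hw (fun k => if k = z then α else γ / (d - 1))
    (fun k => ?_) ?_
  · obtain rfl | hk := eq_or_ne k z
    · have hterm (j : Fin d) : w j * starFamily k a j k ^ 2 =
          if j = k then 1 - μ else μ / (d - 1) * (1 - a) ^ 2 := by
        obtain rfl | hj := eq_or_ne j k
        · simp [w, starFamily_self]
        · simp [w, hj, starFamily_center hj]
      simp only [hterm, sum_ite_eq_add_mul, Fintype.card_fin, if_true]
      convert hα using 2
      field_simp
    · calc (if k = z then α else γ / (d - 1)) ^ 2 = γ ^ 2 / (d - 1) ^ 2 := by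
            rw [if_neg hk, div_pow]
        _ ≤ (d - 1) * μ * a ^ 2 / (d - 1) ^ 2 := by gcongr
        _ = w k * starFamily z a k k ^ 2 := by
            simp only [w, if_neg hk, starFamily_leaf hk]
            field_simp
        _ ≤ ∑ j, w j * starFamily z a j k ^ 2 :=
            single_le_sum (f := fun j => w j * starFamily z a j k ^ 2)
              (fun j _ => mul_nonneg (hw.1 j) (sq_nonneg _)) (mem_univ k)
  · rw [sum_ite_eq_add_mul, Fintype.card_fin, mul_div_cancel₀ _ hd₀.ne']
    exact hT

lemma isChiSqSeparated_starFamily_of_le_sq (hd : 2 ≤ d) (z : Fin d)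
    (hT : 1 + T ≤ (1 - a + √(d - 1) * a) ^ 2) : IsChiSqSeparated T (starFamily z a) := by
  have hd₀ : (0 : ℝ) ≤ d - 1 := by
    have : (2 : ℝ) ≤ d := by exact_mod_cast hd
    linarith
  refine isChiSqSeparated_starFamily hd z (μ := 1) (by simp) (by simp) ?_ hT
  rw [mul_pow, Real.sq_sqrt hd₀, mul_one]

/- Under `hda` the optimal weight `μ` of the leaves in `isChiSqSeparated_starFamily` is at most `1`,
and the resulting optimal value of `(α + γ) ^ 2` is `M = 1 + (d - 1) * a / (2 - a)`. -/
lemma isChiSqSeparated_starFamily_of_mul_le (hd : 2 ≤ d) (z : Fin d) (ha : a ∈ Set.Icc 0 1)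
    (hda : (d - 1) * (1 - a) ^ 2 ≤ (2 - a) ^ 2) (hT : T * (2 - a) ≤ (d - 1) * a) :
    IsChiSqSeparated T (starFamily z a) := by
  have hd₀ : (0 : ℝ) ≤ d - 1 := by
    have : (2 : ℝ) ≤ d := by exact_mod_cast hd
    linarith
  have ha₂ : 0 < 2 - a := by linarith [ha.2]
  obtain ⟨M, hM⟩ : ∃ M, M = 1 + (d - 1) * a / (2 - a) := ⟨_, rfl⟩
  have hM₀ : 0 < M := by
    rw [hM]
    have := div_nonneg (mul_nonneg hd₀ ha.1) ha₂.le
    linarith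
  have hMa : (M - 1) * (2 - a) = (d - 1) * a := by
    rw [hM]
    field_simp
    ring
  have hsqrt : √M ^ 2 = M := Real.sq_sqrt hM₀.le
  have hsqrt₀ : √M ≠ 0 := (Real.sqrt_pos.2 hM₀).ne'
  refine isChiSqSeparated_starFamily hd z (μ := (d - 1) / ((2 - a) ^ 2 * M)) (α := 1 / √M)
    (γ := (M - 1) / √M) ⟨by positivity, ?_⟩ ?_ ?_ ?_
  · rw [div_le_one (by positivity)]
    nlinarith
  · rw [div_pow, hsqrt]
    apply le_of_eq
    field_simp
    linear_combination -(2 - a) * hMa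
  · rw [div_pow, hsqrt]
    apply le_of_eq
    field_simp
    linear_combination ((M - 1) * (2 - a) + (d - 1) * a) * hMa
  · have hTM : 1 + T ≤ M := by
      rw [← le_div_iff₀ ha₂] at hT
      rw [hM]
      gcongr
    calc 1 + T ≤ M := hTM
      _ = √M ^ 2 := hsqrt.symm
      _ = (1 / √M + (M - 1) / √M) ^ 2 := by
          rw [← add_div, add_sub_cancel, hsqrt, div_pow, hsqrt]
          field_simp

end Star

section CoinPair

variable {b T : ℝ}

/-- The two biased coins with bias `b` and `1 - b`. -/
noncomputable def coinPair (b : ℝ) : Fin 2 → Fin 2 → ℝ := ![![1 - b, b], ![b, 1 - b]]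

lemma coinPair_mem_stdSimplex (hb : b ∈ Set.Icc 0 1) (j : Fin 2) :
    coinPair b j ∈ stdSimplex ℝ (Fin 2) := by
  refine ⟨fun k => ?_, ?_⟩ <;> fin_cases j
  · fin_cases k <;> simp [coinPair, hb.1, hb.2]
  · fin_cases k <;> simp [coinPair, hb.1, hb.2]
  · simp [coinPair]
  · simp [coinPair]

lemma coinPair_injective (hb : b ≠ 1 / 2) : Function.Injective (coinPair b) := by
  have hne : coinPair b 0 ≠ coinPair b 1 := fun h => hb <| by
    have h₀ : 1 - b = b := congrFun h 0
    linarith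
  intro i j hij
  fin_cases i <;> fin_cases j <;> first | rfl | exact absurd hij hne | exact absurd hij.symm hne

lemma isChiSqSeparated_coinPair (hb : b ∈ Set.Icc 0 1) (hT : T ≤ (1 - 2 * b) ^ 2) :
    IsChiSqSeparated T (coinPair b) := by
  have hsq : √(((1 - b) ^ 2 + b ^ 2) / 2) ^ 2 = ((1 - b) ^ 2 + b ^ 2) / 2 :=
    Real.sq_sqrt (by positivity)
  have hw : (fun _ => 1 / 2) ∈ stdSimplex ℝ (Fin 2) := ⟨fun _ => by positivity, by norm_num⟩
  refine isChiSqSeparated_of_le_sq_sum (fun j => (coinPair_mem_stdSimplex hb j).2) hw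
    (fun _ => √(((1 - b) ^ 2 + b ^ 2) / 2)) (fun k => ?_) ?_
  · rw [hsq]
    fin_cases k <;> simp [coinPair] <;> linarith
  · rw [Fin.sum_univ_two]
    linarith

lemma sum_fin_succ_pi {α : Type*} [Fintype α] {n : ℕ} (f : (Fin (n + 1) → α) → ℝ) :
    ∑ x, f x = ∑ y, ∑ x : Fin n → α, f (Fin.cons y x) := by
  rw [← (Fin.consEquiv fun _ => α).sum_comp, Fintype.sum_prod_type]
  rfl

lemma testAffinity_coinPair_two (hb₀ : 0 ≤ b) (hb : b ≤ 1 / 2) :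
    testAffinity (coinPair b 0) (coinPair b 1) 2 = 2 * b := by
  have hmin : min ((1 - b) * (1 - b)) (b * b) = b * b :=
    min_eq_right (mul_le_mul (by linarith) (by linarith) hb₀ (by linarith))
  calc testAffinity (coinPair b 0) (coinPair b 1) 2
      = 2 * min ((1 - b) * (1 - b)) (b * b) + 2 * ((1 - b) * b) := by
        simp only [testAffinity, sum_fin_succ_pi, Fin.sum_univ_two]
        simp only [coinPair, Fin.prod_univ_two, Fin.cons_zero, Fin.cons_one, Matrix.cons_val_zero,
          Matrix.cons_val_one, Fintype.sum_unique]
        rw [min_comm (b * b), mul_comm b (1 - b), min_self]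
        ring
    _ = 2 * b := by rw [hmin]; ring

lemma testAffinity_coinPair_three (hb₀ : 0 ≤ b) (hb : b ≤ 1 / 2) :
    testAffinity (coinPair b 0) (coinPair b 1) 3 = 2 * (b ^ 2 * (3 - 2 * b)) := by
  have hb₁ : 0 ≤ 1 - b := by linarith
  have hle₂ : b * (b * (1 - b)) ≤ b * ((1 - b) * (1 - b)) := by gcongr; linarith
  have hle₃ : b * (b * b) ≤ (1 - b) * ((1 - b) * (1 - b)) := by gcongr <;> linarith
  calc testAffinity (coinPair b 0) (coinPair b 1) 3
      = 2 * min ((1 - b) * ((1 - b) * (1 - b))) (b * (b * b)) +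
          6 * min (b * ((1 - b) * (1 - b))) (b * (b * (1 - b))) := by
        simp only [testAffinity, sum_fin_succ_pi, Fin.sum_univ_two]
        simp only [coinPair, Fin.prod_univ_succ, Fin.cons_zero, Fin.cons_succ,
          Fin.prod_univ_zero, Matrix.cons_val_zero, Matrix.cons_val_one, Fintype.sum_unique,
          mul_one]
        simp only [min_comm, mul_comm, mul_left_comm]
        ring_nf
    _ = 2 * (b ^ 2 * (3 - 2 * b)) := by
        rw [min_eq_right hle₂, min_eq_right hle₃]
        ring

/- The probability that a majority of `n` tosses points to the wrong coin has exponential rate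
`4 * b * (1 - b)`; the cruder rate `b` per two tosses, with `b = s ^ 2`, holds for every `n ≥ 2`.
The odd case starts from `n = 3`, where `1 ≤ 2 * s ^ 2 + 2 * s` is what is needed. -/
lemma two_mul_pow_le_testAffinity_coinPair {s : ℝ} (hs₀ : 0 ≤ s) (hs : s ^ 2 ≤ 1 / 2)
    (hs₁ : 1 ≤ 2 * s ^ 2 + 2 * s) :
    ∀ m : ℕ, 2 * s ^ (m + 2) ≤ testAffinity (coinPair (s ^ 2) 0) (coinPair (s ^ 2) 1) (m + 2)
  | 0 => (testAffinity_coinPair_two (sq_nonneg s) hs).ge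
  | 1 => by
    rw [testAffinity_coinPair_three (sq_nonneg s) hs]
    have hs_le : s ≤ 1 := by nlinarith
    have hfactor : 0 ≤ s ^ 3 * ((1 - s) * (2 * s ^ 2 + 2 * s - 1)) :=
      mul_nonneg (pow_nonneg hs₀ 3) (mul_nonneg (sub_nonneg.2 hs_le) (sub_nonneg.2 hs₁))
    calc 2 * s ^ 3 ≤ 2 * s ^ 3 + 2 * (s ^ 3 * ((1 - s) * (2 * s ^ 2 + 2 * s - 1))) := by linarith
      _ = 2 * ((s ^ 2) ^ 2 * (3 - 2 * s ^ 2)) := by ring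
  | m + 2 => by
    have hb : s ^ 2 ∈ Set.Icc 0 1 := ⟨sq_nonneg s, by linarith⟩
    calc 2 * s ^ (m + 4) = s ^ 2 * (2 * s ^ (m + 2)) := by ring
      _ ≤ 2 * s ^ 2 * testAffinity (coinPair (s ^ 2) 0) (coinPair (s ^ 2) 1) (m + 2) := by
          gcongr
          · linarith [sq_nonneg s]
          · exact two_mul_pow_le_testAffinity_coinPair hs₀ hs hs₁ m
      _ ≤ testAffinity (coinPair (s ^ 2) 0) (coinPair (s ^ 2) 1) (m + 2 + 2) := by
          rw [← testAffinity_coinPair_two (sq_nonneg s) hs, mul_comm]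
          exact testAffinity_mul_le (coinPair_mem_stdSimplex hb 0).1
            (coinPair_mem_stdSimplex hb 1).1 (m + 2) 2

lemma forcesChiSqLoss_coinPair {s : ℝ} {n : ℕ} (hn : 2 ≤ n) (hs₀ : 0 ≤ s) (hs : s ^ 2 ≤ 1 / 2)
    (hs₁ : 1 ≤ 2 * s ^ 2 + 2 * s) (hT : T ≤ (1 - 2 * s ^ 2) ^ 2) :
    ForcesChiSqLoss n T (s ^ n) (coinPair (s ^ 2)) := by
  have hb : s ^ 2 ∈ Set.Icc 0 1 := ⟨sq_nonneg s, by linarith⟩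
  obtain ⟨m, rfl⟩ := Nat.exists_eq_add_of_le' hn
  exact (isChiSqSeparated_coinPair hb hT).forcesChiSqLoss_of_le_testAffinity
    (fun j => (coinPair_mem_stdSimplex hb j).1) (two_mul_pow_le_testAffinity_coinPair hs₀ hs hs₁ m)

end CoinPair

section Numerics

variable {d : ℕ} {t : ℝ}

lemma le_affine_of_convexOn {s : Set ℝ} {f : ℝ → ℝ} (hf : ConvexOn ℝ s f) {x y z m c : ℝ}
    (hx : x ∈ s) (hy : y ∈ s) (hfx : f x ≤ m * x + c) (hfy : f y ≤ m * y + c)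
    (hz : z ∈ Set.Icc x y) : f z ≤ m * z + c := by
  have haffine : ConcaveOn ℝ s fun x => m * x + c := by
    refine ⟨hf.1, fun u _ v _ α β _ _ hαβ => le_of_eq ?_⟩
    simp only [smul_eq_mul]
    linear_combination c * hαβ
  have hmax := (hf.sub haffine).le_max_of_mem_Icc hx hy hz
  simp only [Pi.sub_apply] at hmax
  linarith [hmax.trans (max_le (sub_nonpos.2 hfx) (sub_nonpos.2 hfy))]

lemma exp_neg_div_le {k l : ℕ} (hl : l ≠ 0) {B : ℝ} (hB : 0 ≤ B)
    (h : 0.3678794412 ^ k ≤ B ^ l) : Real.exp (-(k / l)) ≤ B := by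
  refine le_of_pow_le_pow_left₀ hl hB ?_
  calc Real.exp (-(k / l)) ^ l = Real.exp (-1) ^ k := by
        rw [← Real.exp_nat_mul, ← Real.exp_nat_mul]
        congr 1
        field_simp
    _ ≤ 0.3678794412 ^ k := by
        gcongr
        exact Real.exp_neg_one_lt_d9.le
    _ ≤ B ^ l := h

lemma exp_neg_le_one_sub_mul {k u : ℝ} (ht : t ∈ Set.Icc 0 u) (hu : Real.exp (-u) ≤ 1 - k * u) :
    Real.exp (-t) ≤ 1 - k * t := by
  have h := le_affine_of_convexOn (m := k) (c := 1) convexOn_exp (Set.mem_univ (-u))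
    (Set.mem_univ 0) (by linarith) (by simp) (z := -t) ⟨neg_le_neg ht.2, neg_nonpos.2 ht.1⟩
  linarith

/-- The lower bound of the theorem in terms of `t = log (1 / δ) / n`. -/
noncomputable def chiSqRate (d : ℕ) (t : ℝ) : ℝ :=
  0.15 * (√d * t + d * t ^ 2)

lemma mul_le_one_sub_exp_neg_s4 (ht : t ∈ Set.Icc 0 1) : 0.63 * t ≤ 1 - Real.exp (-t) := by
  have h₁ : Real.exp (-1) ≤ 1 - 0.63 * 1 := by linarith [Real.exp_neg_one_lt_d9]
  linarith [exp_neg_le_one_sub_mul ht h₁]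

lemma one_add_chiSqRate_le_sq (hd : 4 ≤ d) (ht : t ∈ Set.Icc 0 1) :
    1 + chiSqRate d t ≤ (1 - (1 - Real.exp (-t)) + √(d - 1) * (1 - Real.exp (-t))) ^ 2 := by
  obtain ⟨ht₀, ht₁⟩ := ht
  have hd₄ : (4 : ℝ) ≤ d := by exact_mod_cast hd
  obtain ⟨y, hy⟩ : ∃ y, y = √((d : ℝ) - 1) := ⟨_, rfl⟩
  have hy_sq : y ^ 2 = d - 1 := by rw [hy, Real.sq_sqrt]; linarith
  have hy_ge : 1.732 ≤ y := by
    rw [hy]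
    exact Real.le_sqrt_of_sq_le (by linarith)
  have hsqrt : √d ≤ 1.155 * y := by
    rw [Real.sqrt_le_left (by positivity)]
    nlinarith
  have hslope : 1 + 0.63 * t * (y - 1) ≤
      1 - (1 - Real.exp (-t)) + y * (1 - Real.exp (-t)) := by
    nlinarith [mul_le_one_sub_exp_neg_s4 ⟨ht₀, ht₁⟩]
  have hlin : 0 ≤ 1.26 * (y - 1) - 0.17325 * y := by linarith
  have hquad : 0 ≤ 1.26 * (y - 1) - 0.17325 * y
      + (0.3969 * (y - 1) ^ 2 - 0.15 * (y ^ 2 + 1)) := by nlinarith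
  calc 1 + chiSqRate d t
      = 1 + 0.15 * (√d * t + (y ^ 2 + 1) * t ^ 2) := by rw [chiSqRate, hy_sq]; ring
    _ ≤ 1 + 0.15 * (1.155 * y * t + (y ^ 2 + 1) * t ^ 2) := by gcongr
    _ ≤ (1 + 0.63 * t * (y - 1)) ^ 2 := by
        nlinarith [mul_nonneg hlin (mul_nonneg ht₀ (sub_nonneg.2 ht₁)),
          mul_nonneg hquad (sq_nonneg t)]
    _ ≤ _ := by
        rw [← hy]
        gcongr
        nlinarith

lemma chiSqRate_mul_le {a k : ℝ} (ht : 0 ≤ t) (hd : 1 ≤ d) (hk : k * t ≤ a)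
    (h : 0.15 * (√d + d * t) * (2 - k * t) ≤ (d - 1) * k) :
    chiSqRate d t * (2 - a) ≤ (d - 1) * a := by
  have hd₀ : (0 : ℝ) ≤ d - 1 := sub_nonneg.2 (by exact_mod_cast hd)
  calc chiSqRate d t * (2 - a) ≤ chiSqRate d t * (2 - k * t) := by
        have : 0 ≤ chiSqRate d t := by unfold chiSqRate; positivity
        gcongr
    _ = t * (0.15 * (√d + d * t) * (2 - k * t)) := by unfold chiSqRate; ring
    _ ≤ t * ((d - 1) * k) := by gcongr
    _ = (d - 1) * (k * t) := by ring
    _ ≤ (d - 1) * a := by gcongr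

lemma chiSqRate_three_mul_le (ht : t ∈ Set.Icc 0 1) :
    chiSqRate 3 t * (2 - (1 - Real.exp (-t))) ≤ ((3 : ℕ) - 1) * (1 - Real.exp (-t)) := by
  refine chiSqRate_mul_le ht.1 (by norm_num) (mul_le_one_sub_exp_neg_s4 ht) ?_
  have hsqrt : √(3 : ℕ) ≤ 1.7321 := by
    rw [Real.sqrt_le_left (by norm_num)]
    norm_num
  push_cast at hsqrt ⊢
  nlinarith [ht.1, ht.2]

lemma chiSqRate_two_mul_le (ht : t ∈ Set.Icc 0 0.85) :
    chiSqRate 2 t * (2 - (1 - Real.exp (-t))) ≤ ((2 : ℕ) - 1) * (1 - Real.exp (-t)) := by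
  have hexp : Real.exp (-0.85) ≤ 1 - 0.671 * 0.85 := by
    have h := exp_neg_div_le (k := 17) (l := 20) (B := 1 - 0.671 * 0.85) (by norm_num)
      (by norm_num) (by norm_num)
    norm_num at h ⊢
    exact h
  have hslope : 0.671 * t ≤ 1 - Real.exp (-t) := by
    linarith [exp_neg_le_one_sub_mul ht hexp]
  refine chiSqRate_mul_le ht.1 (by norm_num) hslope ?_
  have hsqrt : √(2 : ℕ) ≤ 1.4143 := by
    rw [Real.sqrt_le_left (by norm_num)]
    norm_num
  push_cast at hsqrt ⊢
  nlinarith [ht.1, ht.2]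

/- On this interval `√(chiSqRate 2 t)` lies below the line `0.673 + 0.57 * (t - 0.925)`, which in
turn lies below `1 - 2 * exp (-2 * t)`. -/
lemma chiSqRate_two_le_sq (ht : t ∈ Set.Icc 0.85 1) :
    chiSqRate 2 t ≤ (1 - 2 * Real.exp (-t) ^ 2) ^ 2 := by
  have hexp₁ : Real.exp (-2) ≤ 0.1425 * -2 + 0.427125 := by
    have h := exp_neg_div_le (k := 2) (l := 1) (B := 0.1425 * -2 + 0.427125) (by norm_num)
      (by norm_num) (by norm_num)
    norm_num at h ⊢
    exact h
  have hexp₂ : Real.exp (-1.7) ≤ 0.1425 * -1.7 + 0.427125 := by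
    have h := exp_neg_div_le (k := 17) (l := 10) (B := 0.1425 * -1.7 + 0.427125) (by norm_num)
      (by norm_num) (by norm_num)
    norm_num at h ⊢
    exact h
  have hchord : Real.exp (-t) ^ 2 ≤ 0.1425 * (-2 * t) + 0.427125 := by
    rw [← Real.exp_nat_mul, Nat.cast_ofNat, mul_neg, ← neg_mul]
    exact le_affine_of_convexOn convexOn_exp (Set.mem_univ _) (Set.mem_univ _) hexp₁ hexp₂
      ⟨by linarith [ht.2], by linarith [ht.1]⟩
  have hsqrt : √(2 : ℕ) ≤ 1.41422 := by
    rw [Real.sqrt_le_left (by norm_num)]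
    norm_num
  calc chiSqRate 2 t = 0.15 * (√(2 : ℕ) * t + 2 * t ^ 2) := by simp [chiSqRate]
    _ ≤ (0.673 + 0.57 * (t - 0.925)) ^ 2 := by
        nlinarith [sq_nonneg (t - 0.925), ht.1, ht.2]
    _ ≤ (1 - 2 * Real.exp (-t) ^ 2) ^ 2 := by
        gcongr
        · linarith [ht.1]
        · linarith

end Numerics

section Assembly

variable {n d : ℕ} {t : ℝ}

lemma isChiSqSeparated_starFamily_exp (hd : 2 ≤ d) (z : Fin d) (ht : t ∈ Set.Icc 0 1)
    (ht₂ : d = 2 → t ≤ 0.85) :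
    IsChiSqSeparated (chiSqRate d t) (starFamily z (1 - Real.exp (-t))) := by
  have ha : 1 - Real.exp (-t) ∈ Set.Icc (0 : ℝ) 1 :=
    ⟨sub_nonneg.2 (Real.exp_le_one_iff.2 (neg_nonpos.2 ht.1)), by linarith [Real.exp_pos (-t)]⟩
  obtain rfl | rfl | hd₄ : d = 2 ∨ d = 3 ∨ 4 ≤ d := by omega
  · refine isChiSqSeparated_starFamily_of_mul_le hd z ha ?_ (chiSqRate_two_mul_le ⟨ht.1, ht₂ rfl⟩)
    push_cast
    nlinarith [ha.1, ha.2]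
  · refine isChiSqSeparated_starFamily_of_mul_le hd z ha ?_ (chiSqRate_three_mul_le ht)
    push_cast
    nlinarith [ha.1, ha.2]
  · exact isChiSqSeparated_starFamily_of_le_sq hd z (one_add_chiSqRate_le_sq hd₄ ht)

lemma exists_forcesChiSqLoss (hn : 2 ≤ n) (hd : 2 ≤ d) (ht : t ∈ Set.Ioc 0 1) :
    ∃ P : Fin d → Fin d → ℝ, Function.Injective P ∧ (∀ j, P j ∈ stdSimplex ℝ (Fin d)) ∧
      (∀ j, #{k | P j k ≠ 0} ≤ 2) ∧
      ForcesChiSqLoss n (chiSqRate d t) (Real.exp (-t) ^ n) P := by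
  have hexp₁ : Real.exp (-t) < 1 := Real.exp_lt_one_iff.2 (neg_neg_of_pos ht.1)
  by_cases hcase : d = 2 → t ≤ 0.85
  · let z : Fin d := ⟨0, by omega⟩
    have ha : 1 - Real.exp (-t) ∈ Set.Icc (0 : ℝ) 1 :=
      ⟨by linarith, by linarith [Real.exp_pos (-t)]⟩
    exact ⟨starFamily z (1 - Real.exp (-t)), starFamily_injective z (by linarith),
      starFamily_mem_stdSimplex z ha, card_starFamily_support_le z,
      forcesChiSqLoss_starFamily z ha (by rw [sub_sub_cancel])
        (isChiSqSeparated_starFamily_exp hd z ⟨ht.1.le, ht.2⟩ hcase)⟩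
  · push Not at hcase
    obtain ⟨rfl, ht₂⟩ := hcase
    have hs_ge : 0.3678 ≤ Real.exp (-t) := by
      have := Real.exp_le_exp.2 (neg_le_neg ht.2)
      linarith [Real.exp_neg_one_gt_d9]
    have hs_le : Real.exp (-t) ≤ 1 / 2 := by
      linarith [mul_le_one_sub_exp_neg_s4 ⟨ht.1.le, ht.2⟩]
    have hb : Real.exp (-t) ^ 2 < 1 / 2 := by nlinarith
    exact ⟨coinPair (Real.exp (-t) ^ 2), coinPair_injective hb.ne,
      coinPair_mem_stdSimplex ⟨by positivity, by linarith⟩,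
      fun j => (card_le_univ _).trans (by simp),
      forcesChiSqLoss_coinPair hn (Real.exp_pos _).le hb.le (by nlinarith)
        (chiSqRate_two_le_sq ⟨ht₂.le, ht.2⟩)⟩

end Assembly

theorem minimax_tail_lower_bound_general (n d : ℕ) (hn : 2 ≤ n) (hd : 2 ≤ d)
    (δ : ℝ) (hδl : Real.exp (-(n : ℝ)) ≤ δ) (hδu : δ < 1) :
    ∃ F : Finset (Fin d → ℝ), F.card = d ∧
      (∀ q ∈ F, (∀ j, 0 ≤ q j) ∧ (∑ j, q j = 1) ∧
        (Finset.univ.filter (fun j => q j ≠ 0)).card ≤ 2) ∧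
      ∀ Φ : (Fin n → Fin d) → (Fin d → ℝ),
        (∀ x, (∀ j, 0 ≤ Φ x j) ∧ ∑ j, Φ x j = 1) →
        ∃ p ∈ F,
          δ ≤ sampleProb p {x |
            ENNReal.ofReal (0.15 * (Real.sqrt d * Real.log (1 / δ) / n
              + (d : ℝ) * Real.log (1 / δ) ^ 2 / n ^ 2)) ≤ chiSqE p (Φ x)} := by
  have hδ₀ : 0 < δ := (Real.exp_pos _).trans_le hδl
  have hn₀ : (0 : ℝ) < n := by exact_mod_cast (by omega : 0 < n)
  have ht : Real.log (1 / δ) / n ∈ Set.Ioc 0 1 := by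
    rw [one_div, Real.log_inv]
    refine ⟨div_pos (neg_pos.2 (Real.log_neg hδ₀ hδu)) hn₀, (div_le_one hn₀).2 ?_⟩
    exact neg_le.1 ((Real.le_log_iff_exp_le hδ₀).2 hδl)
  have hδ_eq : Real.exp (-(Real.log (1 / δ) / n)) ^ n = δ := by
    rw [← Real.exp_nat_mul, one_div, Real.log_inv, neg_div, neg_neg, mul_div_cancel₀ _ hn₀.ne',
      Real.exp_log hδ₀]
  have hrate : 0.15 * (√d * Real.log (1 / δ) / n + (d : ℝ) * Real.log (1 / δ) ^ 2 / n ^ 2) =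
      chiSqRate d (Real.log (1 / δ) / n) := by
    rw [chiSqRate]
    ring
  obtain ⟨P, hinj, hP, hsupp, hforce⟩ := exists_forcesChiSqLoss hn hd ht
  rw [hδ_eq] at hforce
  refine ⟨univ.map ⟨P, hinj⟩, by simp, ?_, fun Φ hΦ => ?_⟩
  · simpa using fun j => ⟨(hP j).1, (hP j).2, hsupp j⟩
  · obtain ⟨j, hj⟩ := hforce Φ hΦ
    exact ⟨P j, by simp, hrate ▸ hj⟩

theorem minimax_tail_lower_bound (n d : ℕ) (hdn : d ≤ n) (hd : 2 ≤ d)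
    (δ : ℝ) (hδl : Real.exp (-(n : ℝ)) < δ) (hδu : δ < Real.exp (-1)) :
    ∃ F : Finset (Fin d → ℝ), F.card = d ∧
      (∀ q ∈ F, (∀ j, 0 ≤ q j) ∧ (∑ j, q j = 1) ∧
        (Finset.univ.filter (fun j => q j ≠ 0)).card ≤ 2) ∧
      ∀ Φ : (Fin n → Fin d) → (Fin d → ℝ),
        (∀ x, (∀ j, 0 ≤ Φ x j) ∧ ∑ j, Φ x j = 1) →
        ∃ p ∈ F,
          δ ≤ sampleProb p {x |
            ENNReal.ofReal (0.15 * (Real.sqrt d * Real.log (1 / δ) / n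
              + (d : ℝ) * Real.log (1 / δ) ^ 2 / n ^ 2)) ≤ chiSqE p (Φ x)} := by
  exact minimax_tail_lower_bound_general n d (hd.trans hdn) hd δ hδl.le
    (hδu.trans (Real.exp_lt_one_iff.2 (by norm_num)))
end

section
/- For all real numbers p ≥ 0 and q > 0 such that q ≥ p/8, one has (√p − √q)² ≤ (p − q)²/q ≤ 15·(√p − √q)². -/
theorem sub_sq_div_eq_sq_sqrt_sub_sqrt_mul {p q : ℝ} (hp : 0 ≤ p) (hq : 0 < q) :
    (p - q) ^ 2 / q = (√p - √q) ^ 2 * (√(p / q) + 1) ^ 2 := by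
  have hsqrt_q : √q ≠ 0 := (Real.sqrt_pos.mpr hq).ne'
  calc (p - q) ^ 2 / q
      = (√p ^ 2 - √q ^ 2) ^ 2 / √q ^ 2 := by rw [Real.sq_sqrt hp, Real.sq_sqrt hq.le]
    _ = (√p - √q) ^ 2 * (√p / √q + 1) ^ 2 := by field_simp; ring
    _ = (√p - √q) ^ 2 * (√(p / q) + 1) ^ 2 := by rw [Real.sqrt_div hp]

theorem sq_sqrt_sub_sqrt_le_sub_sq_div {p q : ℝ} (hp : 0 ≤ p) (hq : 0 < q) :
    (√p - √q) ^ 2 ≤ (p - q) ^ 2 / q := by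
  rw [sub_sq_div_eq_sq_sqrt_sub_sqrt_mul hp hq]
  have one_le_factor : 1 ≤ (√(p / q) + 1) ^ 2 :=
    one_le_pow₀ (le_add_of_nonneg_left (Real.sqrt_nonneg _))
  exact le_mul_of_one_le_right (sq_nonneg _) one_le_factor

theorem chiSq_term_hellinger_comparison_general {p q c : ℝ} (hp : 0 ≤ p) (hq : 0 < q)
    (hpq : p ≤ c * q) :
    (√p - √q) ^ 2 ≤ (p - q) ^ 2 / q ∧
      (p - q) ^ 2 / q ≤ (√c + 1) ^ 2 * (√p - √q) ^ 2 := by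
  refine ⟨sq_sqrt_sub_sqrt_le_sub_sq_div hp hq, ?_⟩
  have ratio_le : p / q ≤ c := (div_le_iff₀ hq).mpr hpq
  calc (p - q) ^ 2 / q
      = (√(p / q) + 1) ^ 2 * (√p - √q) ^ 2 := by
        rw [sub_sq_div_eq_sq_sqrt_sub_sqrt_mul hp hq, mul_comm]
    _ ≤ (√c + 1) ^ 2 * (√p - √q) ^ 2 := by gcongr

theorem sqrt_eight_add_one_sq_le : (√8 + 1) ^ 2 ≤ (15 : ℝ) := by
  have sqrt_eight_le : √8 ≤ 3 := Real.sqrt_le_iff.mpr (by norm_num)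
  calc (√8 + 1) ^ 2 = 9 + 2 * √8 := by rw [add_sq, Real.sq_sqrt (by norm_num)]; ring
    _ ≤ 15 := by linarith

/-- Pointwise χ²-loss term `F(p, q) = (p - q)² / q` is comparable to the squared
Hellinger term `(√p - √q)²` whenever `q ≥ p/8`. -/
theorem chiSq_term_hellinger_comparison (p q : ℝ) (hp : 0 ≤ p) (hq : 0 < q)
    (h : p / 8 ≤ q) :
    (Real.sqrt p - Real.sqrt q) ^ 2 ≤ (p - q) ^ 2 / q ∧
      (p - q) ^ 2 / q ≤ 15 * (Real.sqrt p - Real.sqrt q) ^ 2 :=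
  (chiSq_term_hellinger_comparison_general hp hq ((div_le_iff₀' (by norm_num)).mp h)).imp_right
    fun upper ↦ upper.trans (mul_le_mul_of_nonneg_right sqrt_eight_add_one_sq_le (sq_nonneg _))
end
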